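/- There exists ϑ₀ ∈ (0,1) such that for every ϑ ∈ (0, ϑ₀) there exist a C^∞ function φ : ℝ → ℝ with φ(t) > 0 for t > 0, constants σ > 0, α ∈ (1,2) and c ∈ (0,1), such that: (i) φ(0) = 0, φ'(0) = 0, φ''(0) = 1 and lim_{t→0⁺} φ'(t)/t = 1; (ii) there exists T > 0 such that φ agrees with a polynomial of degree 2 on [T, ∞); (iii) the function t ↦ φ'(t)/t is strictly decreasing on (0, ∞) and lim_{t→+∞} φ'(t)/t < ϑ; (iv) min(φ'(t)/t, φ''(t)) ≥ σ for all t > 0, so that φ is strictly convex on [0, ∞) and 0 is the unique critical point of φ in [0, ∞); (v) φ(t) = c·t^α for every t > 0 with φ'(t)/t ∈ [ϑ, 1−ϑ]. -/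

import Mathlib

open scoped ContDiff

/-!
Write `g = φ' / t`. Since `-t² g' = φ' - t φ''`, the slope `g` strictly decreases as soon as
`t φ'' < φ'`, and this inequality propagates to the right wherever `φ''` is antitone.

Start from `f = t² / 2 · exp (-ε h)`, where `h` is smooth, vanishes on `(-∞, 0]` and equals
`log + const` on `[1, ∞)`. Then `f` is exactly `c t ^ (2 - ε)` on `[1, ∞)`, with no constants to
match, and `t f'' < f'` because `t h'` is a smooth monotone step. As `ε → 0` the second derivative
is positive on `[0, 1]` by compactness and `f' 1 → 1`, so `f' 1 > 1 - ϑ` for small `ε`. As `g → 0`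
at infinity, `g T < ϑ` for some `T`. On `[T, T + 1]` the second derivative is smoothly frozen to a
positive constant while staying antitone, and integrating twice gives `φ`. The window
`ϑ ≤ g ≤ 1 - ϑ` then lies inside `[1, T]`, where `φ = f`.
-/

open Set Filter Topology Real

section Calculus

lemma mem_Ioo_of_strictAntiOn {α β : Type*} [LinearOrder α] [Preorder β] {g : α → β} {s : Set α}
    (hg : StrictAntiOn g s) {x y t : α} {a b : β} (hx : x ∈ s) (hy : y ∈ s) (ht : t ∈ s)
    (hgx : b < g x) (hgy : g y < a) (hgt : g t ∈ Icc a b) : t ∈ Ioo x y :=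
  ⟨(hg.lt_iff_gt ht hx).1 (hgt.2.trans_lt hgx), (hg.lt_iff_gt hy ht).1 (hgy.trans_le hgt.1)⟩

lemma contDiff_integral_of_contDiff {E : Type*} [NormedAddCommGroup E] [NormedSpace ℝ E]
    [CompleteSpace E] {n : ℕ∞} {f : ℝ → E} (hf : ContDiff ℝ n f) (a : ℝ) :
    ContDiff ℝ (n + 1) fun t ↦ ∫ s in a..t, f s := by
  have hderiv (t : ℝ) : HasDerivAt (fun u ↦ ∫ s in a..u, f s) (f t) t :=
    (hf.continuous.integral_hasStrictDerivAt a t).hasDerivAt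
  refine contDiff_succ_iff_deriv.2 ⟨fun t ↦ (hderiv t).differentiableAt, by simp, ?_⟩
  rwa [funext fun t ↦ (hderiv t).deriv]

lemma eqOn_of_eqOn_deriv {E : Type*} [NormedAddCommGroup E] [NormedSpace ℝ E] {f g : ℝ → E}
    {s : Set ℝ} {a : ℝ} (hs : Convex ℝ s) (hs' : UniqueDiffOn ℝ s) (hf : Differentiable ℝ f)
    (hg : Differentiable ℝ g) (hfg : EqOn (deriv f) (deriv g) s) (ha : a ∈ s)
    (hfga : f a = g a) : EqOn f g s := by
  refine hs.eqOn_of_fderivWithin_eq hf.differentiableOn hg.differentiableOn hs' (fun t ht ↦ ?_)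
    ha hfga
  rw [(hf t).fderivWithin (hs' t ht), (hg t).fderivWithin (hs' t ht), ← toSpanSingleton_deriv,
    ← toSpanSingleton_deriv, hfg ht]

variable {f : ℝ → ℝ} {a D σ T : ℝ}

lemma continuous_deriv_deriv (hf : ContDiff ℝ 2 f) : Continuous (deriv (deriv f)) :=
  (hf.deriv' (n := 1)).continuous_deriv_one

lemma eq_affine_of_deriv_eq_const (hf : Differentiable ℝ f) (hD : ∀ t ≥ a, deriv f t = D) :
    ∀ t ≥ a, f t = D * t + (f a - D * a) := by
  refine eqOn_of_eqOn_deriv (convex_Ici a) (uniqueDiffOn_Ici a) hf (by fun_prop)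
    (fun t ht ↦ ?_) self_mem_Ici (by ring)
  simp [hD t ht]

lemma eq_quadratic_of_deriv_deriv_eq_const (hf : Differentiable ℝ f)
    (hf' : Differentiable ℝ (deriv f)) (hD : ∀ t ≥ a, deriv (deriv f) t = D) :
    ∃ q r, ∀ t ≥ a, f t = D / 2 * t ^ 2 + q * t + r := by
  set q := deriv f a - D * a
  refine ⟨q, f a - (D / 2 * a ^ 2 + q * a), eqOn_of_eqOn_deriv (convex_Ici a) (uniqueDiffOn_Ici a)
    hf (by fun_prop) (fun t ht ↦ ?_) self_mem_Ici (by ring)⟩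
  have hquad : HasDerivAt (fun t ↦ D / 2 * t ^ 2 + q * t + (f a - (D / 2 * a ^ 2 + q * a)))
      (D / 2 * (2 * t) + q) t := by
    simpa using (((hasDerivAt_pow 2 t).const_mul (D / 2)).add
      ((hasDerivAt_id' t).const_mul q)).add_const (f a - (D / 2 * a ^ 2 + q * a))
  rw [eq_affine_of_deriv_eq_const hf' hD t ht, hquad.deriv]
  ring

lemma tendsto_div_atTop_of_eq_affine {q : ℝ} (hf : ∀ t ≥ a, f t = D * t + q) :
    Tendsto (fun t ↦ f t / t) atTop (𝓝 D) := by
  have hlim : Tendsto (fun t : ℝ ↦ D + q * t⁻¹) atTop (𝓝 (D + q * 0)) :=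
    (tendsto_inv_atTop_zero.const_mul q).const_add D
  rw [mul_zero, add_zero] at hlim
  refine hlim.congr' ?_
  filter_upwards [eventually_ge_atTop a, eventually_ne_atTop 0] with t ht ht0
  rw [hf t ht]
  field_simp

lemma tendsto_div_nhdsGT_zero (hf : DifferentiableAt ℝ f 0) (hf0 : f 0 = 0) :
    Tendsto (fun t ↦ f t / t) (𝓝[>] 0) (𝓝 (deriv f 0)) := by
  simpa [hf0, div_eq_inv_mul] using hf.hasDerivAt.tendsto_slope_zero_right

lemma le_min_div_deriv (hf : Differentiable ℝ f) (hf0 : f 0 = 0)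
    (hσ : ∀ t ≥ 0, σ ≤ deriv f t) : ∀ t > 0, σ ≤ min (f t / t) (deriv f t) := by
  intro t ht
  have hmvt := (convex_Ici 0).mul_sub_le_image_sub_of_le_deriv hf.continuous.continuousOn
    hf.differentiableOn (fun s hs ↦ hσ s (interior_subset hs)) 0 self_mem_Ici t ht.le ht.le
  rw [hf0, sub_zero, sub_zero] at hmvt
  exact le_min ((le_div_iff₀ ht).2 hmvt) (hσ t ht.le)

lemma pos_of_deriv_pos (hf : Continuous f) (hf0 : f 0 = 0) (hpos : ∀ t > 0, 0 < deriv f t) :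
    ∀ t > 0, 0 < f t := by
  intro t ht
  have hmono : StrictMonoOn f (Ici 0) :=
    strictMonoOn_of_deriv_pos (convex_Ici 0) hf.continuousOn (by simpa using hpos)
  simpa [hf0] using hmono self_mem_Ici ht.le ht

lemma strictAntiOn_div_of_mul_deriv_lt (hf : Differentiable ℝ f)
    (hlt : ∀ t > 0, t * deriv f t < f t) : StrictAntiOn (fun t ↦ f t / t) (Ioi 0) := by
  refine strictAntiOn_of_deriv_neg (convex_Ioi 0)
    (hf.continuous.continuousOn.div continuousOn_id fun t ht ↦ ht.ne') fun t ht ↦ ?_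
  rw [interior_Ioi, mem_Ioi] at ht
  rw [deriv_fun_div (hf t) differentiableAt_fun_id ht.ne', deriv_id'']
  exact div_neg_of_neg_of_pos (by linarith [hlt t ht]) (by positivity)

lemma deriv_lt_div_of_mul_deriv_lt (hf : Differentiable ℝ f)
    (hlt : ∀ t > 0, t * deriv f t < f t) {s t : ℝ} (hs : 0 < s) (hst : s ≤ t) :
    deriv f t < f s / s := by
  have ht : 0 < t := hs.trans_le hst
  calc deriv f t < f t / t := (lt_div_iff₀' ht).2 (hlt t ht)
    _ ≤ f s / s := (strictAntiOn_div_of_mul_deriv_lt hf hlt).antitoneOn hs ht hst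

lemma mul_deriv_lt_of_antitoneOn_deriv (hf : Differentiable ℝ f) (hT : 0 ≤ T)
    (hanti : AntitoneOn (deriv f) (Ici T)) (hlt : T * deriv f T < f T) :
    ∀ t ≥ T, t * deriv f t < f t := by
  intro t ht
  have hmvt : deriv f t * (t - T) ≤ f t - f T :=
    (convex_Icc T t).mul_sub_le_image_sub_of_le_deriv hf.continuous.continuousOn
      hf.differentiableOn (fun s hs ↦ hanti (interior_subset hs).1 ht (interior_subset hs).2)
      T (left_mem_Icc.2 ht) t (right_mem_Icc.2 ht) ht
  have hTt : T * deriv f t ≤ T * deriv f T := by gcongr; exact hanti self_mem_Ici ht ht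
  linarith

end Calculus

section Flatten

/-- `u` itself up to time `T`, frozen at the value `u (T + 1)` from time `T + 1` on, and a smooth
convex combination of the two in between. -/
noncomputable def flattenAfter (u : ℝ → ℝ) (T t : ℝ) : ℝ :=
  (1 - smoothTransition (t - T)) * u t + smoothTransition (t - T) * u (T + 1)

variable {u : ℝ → ℝ} {T t : ℝ}

lemma flattenAfter_of_le (ht : t ≤ T) : flattenAfter u T t = u t := by
  simp [flattenAfter, smoothTransition.zero_of_nonpos (sub_nonpos.2 ht)]

lemma flattenAfter_of_ge (ht : T + 1 ≤ t) : flattenAfter u T t = u (T + 1) := by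
  simp [flattenAfter, smoothTransition.one_of_one_le (le_sub_iff_add_le'.2 ht)]

lemma contDiff_flattenAfter {n : ℕ∞} (hu : ContDiff ℝ n u) (T : ℝ) :
    ContDiff ℝ n (flattenAfter u T) := by
  have hχ : ContDiff ℝ n fun t ↦ smoothTransition (t - T) :=
    smoothTransition.contDiff.comp (contDiff_id.sub contDiff_const)
  exact ((contDiff_const.sub hχ).mul hu).add (hχ.mul contDiff_const)

lemma continuous_flattenAfter (hu : Continuous u) (T : ℝ) : Continuous (flattenAfter u T) :=
  (contDiff_flattenAfter (n := 0) (contDiff_zero.2 hu) T).continuous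

lemma flattenAfter_pos (hT : 0 < u (T + 1)) (ht : 0 < u t) : 0 < flattenAfter u T t :=
  convex_Ioi (0 : ℝ) ht hT (sub_nonneg.2 (smoothTransition.le_one _)) (smoothTransition.nonneg _)
    (sub_add_cancel _ _)

lemma flattenAfter_eq_add (u : ℝ → ℝ) (T t : ℝ) : flattenAfter u T t =
    u (T + 1) + (1 - smoothTransition (t - T)) * (u t - u (T + 1)) := by
  rw [flattenAfter]; ring

lemma le_flattenAfter_of_antitoneOn (hu : AntitoneOn u (Ici T)) (ht : T ≤ t) :
    u (T + 1) ≤ flattenAfter u T t := by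
  rcases le_total t (T + 1) with ht1 | ht1
  · rw [flattenAfter_eq_add, le_add_iff_nonneg_right]
    exact mul_nonneg (sub_nonneg.2 (smoothTransition.le_one _))
      (sub_nonneg.2 (hu ht (ht.trans ht1) ht1))
  · exact (flattenAfter_of_ge ht1).ge

lemma antitoneOn_flattenAfter (hu : AntitoneOn u (Ici T)) :
    AntitoneOn (flattenAfter u T) (Ici T) := by
  intro s hs t ht hst
  rcases le_total t (T + 1) with ht1 | ht1
  · have hχ : smoothTransition (s - T) ≤ smoothTransition (t - T) :=
      smoothTransition.monotone (by gcongr)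
    rw [flattenAfter_eq_add, flattenAfter_eq_add]
    gcongr
    · exact sub_nonneg.2 (hu ht (mem_Ici.2 (by simp)) ht1)
    · exact sub_nonneg.2 (smoothTransition.le_one _)
    · exact hu hs ht hst
  · exact (flattenAfter_of_ge ht1).trans_le (le_flattenAfter_of_antitoneOn hu hs)

lemma exists_pos_forall_le_flattenAfter (hu : Continuous u) (hpos : ∀ t ≥ 0, 0 < u t)
    (hT : 0 ≤ T) : ∃ σ > 0, ∀ t ≥ 0, σ ≤ flattenAfter u T t := by
  obtain ⟨m, hm, hmin⟩ := isCompact_Icc.exists_isMinOn (nonempty_Icc.2 (by linarith : 0 ≤ T + 1))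
    (continuous_flattenAfter hu T).continuousOn
  refine ⟨_, flattenAfter_pos (hpos _ (by linarith)) (hpos m hm.1), fun t ht ↦ ?_⟩
  rcases le_total t (T + 1) with ht1 | ht1
  · exact hmin ⟨ht, ht1⟩
  · rw [flattenAfter_of_ge ht1, ← flattenAfter_of_ge (u := u) le_rfl]
    exact hmin ⟨by linarith, le_rfl⟩

end Flatten

section QuadraticTail

/-- The function with the same germ as `f` at `T` whose second derivative is that of `f`,
flattened after `T`: it continues `f` on `(-∞, T]` to a function that is a quadratic polynomial on
`[T + 1, ∞)`. -/
noncomputable def quadraticTail (f : ℝ → ℝ) (T t : ℝ) : ℝ :=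
  f T + ∫ s in T..t, (deriv f T + ∫ r in T..s, flattenAfter (deriv (deriv f)) T r)

variable {f : ℝ → ℝ} {T : ℝ}

lemma contDiff_quadraticTail (hf : ContDiff ℝ ∞ f) (T : ℝ) : ContDiff ℝ ∞ (quadraticTail f T) := by
  have hf2 : ContDiff ℝ ∞ (deriv (deriv f)) := hf.iterate_deriv 2
  exact contDiff_const.add (contDiff_integral_of_contDiff (contDiff_const.add
    (contDiff_integral_of_contDiff (contDiff_flattenAfter hf2 T) T)) T)

lemma hasDerivAt_quadraticTail (hf : ContDiff ℝ 2 f) (T t : ℝ) :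
    HasDerivAt (quadraticTail f T)
      (deriv f T + ∫ r in T..t, flattenAfter (deriv (deriv f)) T r) t := by
  have hflat := continuous_flattenAfter (continuous_deriv_deriv hf) T
  have hcont : Continuous fun s ↦ deriv f T + ∫ r in T..s, flattenAfter (deriv (deriv f)) T r :=
    continuous_const.add
      (contDiff_integral_of_contDiff (n := 0) (contDiff_zero.2 hflat) T).continuous
  exact (hcont.integral_hasStrictDerivAt T t).hasDerivAt.const_add _

lemma hasDerivAt_deriv_quadraticTail (hf : ContDiff ℝ 2 f) (T t : ℝ) :
    HasDerivAt (deriv (quadraticTail f T)) (flattenAfter (deriv (deriv f)) T t) t := by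
  rw [funext fun s ↦ (hasDerivAt_quadraticTail hf T s).deriv]
  exact ((continuous_flattenAfter (continuous_deriv_deriv hf) T).integral_hasStrictDerivAt
    T t).hasDerivAt.const_add _

lemma differentiable_quadraticTail (hf : ContDiff ℝ 2 f) (T : ℝ) :
    Differentiable ℝ (quadraticTail f T) :=
  fun t ↦ (hasDerivAt_quadraticTail hf T t).differentiableAt

lemma differentiable_deriv_quadraticTail (hf : ContDiff ℝ 2 f) (T : ℝ) :
    Differentiable ℝ (deriv (quadraticTail f T)) :=
  fun t ↦ (hasDerivAt_deriv_quadraticTail hf T t).differentiableAt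

lemma deriv_deriv_quadraticTail (hf : ContDiff ℝ 2 f) (T : ℝ) :
    deriv (deriv (quadraticTail f T)) = flattenAfter (deriv (deriv f)) T :=
  funext fun t ↦ (hasDerivAt_deriv_quadraticTail hf T t).deriv

lemma eqOn_deriv_quadraticTail (hf : ContDiff ℝ 2 f) (T : ℝ) :
    EqOn (deriv (quadraticTail f T)) (deriv f) (Iic T) := by
  refine eqOn_of_eqOn_deriv (convex_Iic T) (uniqueDiffOn_Iic T)
    (differentiable_deriv_quadraticTail hf T) hf.differentiable_deriv_two
    (fun t ht ↦ ?_) self_mem_Iic ?_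
  · rw [deriv_deriv_quadraticTail hf, flattenAfter_of_le ht]
  · simp [(hasDerivAt_quadraticTail hf T T).deriv]

lemma eqOn_quadraticTail (hf : ContDiff ℝ 2 f) (T : ℝ) : EqOn (quadraticTail f T) f (Iic T) :=
  eqOn_of_eqOn_deriv (convex_Iic T) (uniqueDiffOn_Iic T) (differentiable_quadraticTail hf T)
    (hf.differentiable two_ne_zero) (eqOn_deriv_quadraticTail hf T) self_mem_Iic
    (by simp [quadraticTail])

lemma exists_quadraticTail_eq_quadratic (hf : ContDiff ℝ 2 f) (T : ℝ) :
    ∃ q r, ∀ t ≥ T + 1,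
      quadraticTail f T t = deriv (deriv f) (T + 1) / 2 * t ^ 2 + q * t + r :=
  eq_quadratic_of_deriv_deriv_eq_const (differentiable_quadraticTail hf T)
    (differentiable_deriv_quadraticTail hf T)
    fun t ht ↦ by rw [deriv_deriv_quadraticTail hf, flattenAfter_of_ge ht]

lemma tendsto_deriv_quadraticTail_div_atTop (hf : ContDiff ℝ 2 f) (T : ℝ) :
    Tendsto (fun t ↦ deriv (quadraticTail f T) t / t) atTop (𝓝 (deriv (deriv f) (T + 1))) :=
  tendsto_div_atTop_of_eq_affine <| eq_affine_of_deriv_eq_const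
    (differentiable_deriv_quadraticTail hf T)
    fun t ht ↦ by rw [deriv_deriv_quadraticTail hf, flattenAfter_of_ge ht]

lemma strictAntiOn_deriv_quadraticTail_div (hf : ContDiff ℝ 2 f) (hT : 0 < T)
    (hanti : AntitoneOn (deriv (deriv f)) (Ici T))
    (hlt : ∀ t > 0, t * deriv (deriv f) t < deriv f t) :
    StrictAntiOn (fun t ↦ deriv (quadraticTail f T) t / t) (Ioi 0) := by
  have hdiff := differentiable_deriv_quadraticTail hf T
  have hlow : ∀ t > 0, t ≤ T →
      t * deriv (deriv (quadraticTail f T)) t < deriv (quadraticTail f T) t := by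
    intro t ht htT
    rw [deriv_deriv_quadraticTail hf, flattenAfter_of_le htT, eqOn_deriv_quadraticTail hf T htT]
    exact hlt t ht
  refine strictAntiOn_div_of_mul_deriv_lt hdiff fun t ht ↦ ?_
  rcases le_total t T with htT | htT
  · exact hlow t ht htT
  · refine mul_deriv_lt_of_antitoneOn_deriv hdiff hT.le ?_ (hlow T hT le_rfl) t htT
    rw [deriv_deriv_quadraticTail hf]
    exact antitoneOn_flattenAfter hanti

end QuadraticTail

section SmoothLog

/-- A primitive of the smooth function `χ(t) / t`, where `χ` is the standard smooth step from `0`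
to `1` on `[0, 1]`. It vanishes on `(-∞, 0]` and differs from `log` by a constant on `[1, ∞)`. -/
noncomputable def smoothLog (t : ℝ) : ℝ :=
  ∫ s in 0..t, smoothTransition s / s

lemma contDiff_smoothTransition_div_id : ContDiff ℝ ∞ fun t ↦ smoothTransition t / t := by
  have hnum : ContDiff ℝ ∞ fun t ↦ t⁻¹ * expNegInvGlue t := by
    simpa using expNegInvGlue.contDiff_polynomial_eval_inv_mul (n := ⊤) Polynomial.X
  have hden : ContDiff ℝ ∞ fun t ↦ expNegInvGlue t + expNegInvGlue (1 - t) := by fun_prop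
  convert! hnum.div hden fun t ↦ (smoothTransition.pos_denom t).ne' using 2
  rw [smoothTransition, div_right_comm, Pi.div_apply, div_eq_inv_mul (expNegInvGlue _)]

lemma contDiff_smoothLog : ContDiff ℝ ∞ smoothLog :=
  contDiff_integral_of_contDiff (n := ⊤) contDiff_smoothTransition_div_id 0

lemma hasDerivAt_smoothLog (t : ℝ) : HasDerivAt smoothLog (smoothTransition t / t) t :=
  (contDiff_smoothTransition_div_id.continuous.integral_hasStrictDerivAt 0 t).hasDerivAt

lemma smoothLog_zero : smoothLog 0 = 0 :=
  intervalIntegral.integral_same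

lemma smoothLog_nonneg {t : ℝ} (ht : 0 ≤ t) : 0 ≤ smoothLog t :=
  intervalIntegral.integral_nonneg ht fun s hs ↦ div_nonneg (smoothTransition.nonneg s) hs.1

lemma smoothLog_eq_add_log {t : ℝ} (ht : 1 ≤ t) : smoothLog t = smoothLog 1 + log t := by
  have hcont := contDiff_smoothTransition_div_id.continuous
  have htail : ∫ s in 1..t, smoothTransition s / s = log t := by
    rw [← div_one t, ← integral_inv_of_pos one_pos (one_pos.trans_le ht), div_one]
    refine intervalIntegral.integral_congr fun s hs ↦ ?_
    rw [uIcc_of_le ht] at hs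
    simp [smoothTransition.one_of_one_le hs.1]
  rw [smoothLog, smoothLog, ← htail, intervalIntegral.integral_add_adjacent_intervals
    (hcont.intervalIntegrable _ _) (hcont.intervalIntegrable _ _)]

end SmoothLog

section DampedSquare

/-- The profile of the cut-off function before its quadratic tail is attached: `t ^ 2 / 2` to
leading order at `0`, and a multiple of `t ^ (2 - ε)` on `[1, ∞)`. -/
noncomputable def dampedSquare (ε t : ℝ) : ℝ :=
  t ^ 2 / 2 * exp (-(ε * smoothLog t))

lemma contDiff_dampedSquare (ε : ℝ) : ContDiff ℝ ∞ (dampedSquare ε) :=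
  ((contDiff_id.pow 2).div_const 2).mul (contDiff_const.mul contDiff_smoothLog).neg.exp

lemma contDiff_two_dampedSquare (ε : ℝ) : ContDiff ℝ 2 (dampedSquare ε) :=
  contDiff_infty.1 (contDiff_dampedSquare ε) 2

/-- The constant `c` such that `dampedSquare ε t = c * t ^ (2 - ε)` for `t ≥ 1`. -/
noncomputable def powerCoeff (ε : ℝ) : ℝ :=
  exp (-(ε * smoothLog 1)) / 2

variable {ε t : ℝ}

lemma powerCoeff_mem_Ioo (hε : 0 ≤ ε) : powerCoeff ε ∈ Ioo 0 1 := by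
  have hexp : exp (-(ε * smoothLog 1)) ≤ 1 :=
    exp_le_one_iff.2 (neg_nonpos.2 (mul_nonneg hε (smoothLog_nonneg zero_le_one)))
  exact ⟨half_pos (exp_pos _), (half_lt_self (exp_pos _)).trans_le hexp⟩

lemma hasDerivAt_exp_neg_mul_smoothLog (ε t : ℝ) :
    HasDerivAt (fun s ↦ exp (-(ε * smoothLog s)))
      (exp (-(ε * smoothLog t)) * -(ε * (smoothTransition t / t))) t :=
  ((hasDerivAt_smoothLog t).const_mul ε).neg.exp

lemma deriv_dampedSquare (ε t : ℝ) : deriv (dampedSquare ε) t =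
    t * exp (-(ε * smoothLog t)) * (1 - ε / 2 * smoothTransition t) := by
  have hderiv : HasDerivAt (dampedSquare ε) _ t :=
    ((hasDerivAt_pow 2 t).div_const 2).mul (hasDerivAt_exp_neg_mul_smoothLog ε t)
  rw [hderiv.deriv]
  rcases eq_or_ne t 0 with rfl | ht
  · simp
  · push_cast; field_simp; ring

lemma deriv_deriv_dampedSquare (ε t : ℝ) : deriv (deriv (dampedSquare ε)) t =
    exp (-(ε * smoothLog t)) * ((1 - ε / 2 * smoothTransition t) * (1 - ε * smoothTransition t)
      - ε / 2 * (t * deriv smoothTransition t)) := by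
  have hχ : HasDerivAt smoothTransition (deriv smoothTransition t) t :=
    (smoothTransition.contDiff (n := 1)).differentiable_one t |>.hasDerivAt
  have hderiv := ((hasDerivAt_id' t).fun_mul (hasDerivAt_exp_neg_mul_smoothLog ε t)).fun_mul
    ((hχ.const_mul (ε / 2)).const_sub 1)
  rw [funext (deriv_dampedSquare ε)]
  refine hderiv.deriv.trans ?_
  rcases eq_or_ne t 0 with rfl | ht
  · simp
  · field_simp; ring

lemma mul_deriv_deriv_dampedSquare_lt (hε : ε ∈ Ioo 0 2) (ht : 0 < t) :
    t * deriv (deriv (dampedSquare ε)) t < deriv (dampedSquare ε) t := by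
  have hχ0 := smoothTransition.pos_of_pos ht
  have hχ1 := smoothTransition.le_one t
  have hχ' : 0 ≤ deriv smoothTransition t := smoothTransition.monotone.deriv_nonneg
  have hfactor : 0 < 1 - ε / 2 * smoothTransition t := by nlinarith [hε.1, hε.2]
  have hε0 := hε.1
  rw [← sub_pos, deriv_dampedSquare, deriv_deriv_dampedSquare]
  calc 0 < t * exp (-(ε * smoothLog t)) * ((1 - ε / 2 * smoothTransition t) *
        (ε * smoothTransition t) + ε / 2 * (t * deriv smoothTransition t)) := by positivity
    _ = _ := by ring

lemma dampedSquare_of_one_le (ε : ℝ) (ht : 1 ≤ t) :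
    dampedSquare ε t = powerCoeff ε * t ^ (2 - ε) := by
  have ht0 : 0 < t := one_pos.trans_le ht
  have hexp : exp (-(ε * smoothLog t)) = exp (-(ε * smoothLog 1)) * t ^ (-ε) := by
    rw [smoothLog_eq_add_log ht, rpow_def_of_pos ht0, ← exp_add]
    ring_nf
  rw [dampedSquare, hexp, powerCoeff, sub_eq_add_neg, rpow_add ht0, rpow_two]
  ring

lemma eqOn_deriv_dampedSquare (ε : ℝ) : EqOn (deriv (dampedSquare ε))
    (fun t ↦ powerCoeff ε * (2 - ε) * t ^ (1 - ε)) (Ioi 1) := by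
  intro t ht
  rw [EqOn.deriv (fun s hs ↦ dampedSquare_of_one_le ε (mem_Ioi.1 hs).le) isOpen_Ioi ht,
    deriv_const_mul_field, Real.deriv_rpow_const]
  ring_nf

lemma eqOn_deriv_deriv_dampedSquare (ε : ℝ) : EqOn (deriv (deriv (dampedSquare ε)))
    (fun t ↦ powerCoeff ε * (2 - ε) * (1 - ε) * t ^ (-ε)) (Ioi 1) := by
  intro t ht
  rw [(eqOn_deriv_dampedSquare ε).deriv isOpen_Ioi ht, deriv_const_mul_field,
    Real.deriv_rpow_const]
  ring_nf

lemma antitoneOn_deriv_deriv_dampedSquare (hε : ε ∈ Ioo 0 1) :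
    AntitoneOn (deriv (deriv (dampedSquare ε))) (Ioi 1) := by
  refine AntitoneOn.congr (fun s hs t _ hst ↦ ?_) (eqOn_deriv_deriv_dampedSquare ε).symm
  have h1 : 0 ≤ 1 - ε := sub_nonneg.2 hε.2.le
  have h2 : 0 ≤ 2 - ε := by linarith
  have h3 : 0 < powerCoeff ε := (powerCoeff_mem_Ioo hε.1.le).1
  refine mul_le_mul_of_nonneg_left ?_ (by positivity)
  exact rpow_le_rpow_of_nonpos (one_pos.trans hs) hst (neg_nonpos.2 hε.1.le)

lemma tendsto_deriv_dampedSquare_div_atTop (hε : 0 < ε) :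
    Tendsto (fun t ↦ deriv (dampedSquare ε) t / t) atTop (𝓝 0) := by
  have hlim := (tendsto_rpow_neg_atTop hε).const_mul (powerCoeff ε * (2 - ε))
  rw [mul_zero] at hlim
  refine hlim.congr' ?_
  filter_upwards [eventually_gt_atTop 1] with t ht
  have ht0 : 0 < t := one_pos.trans ht
  have hpow : t ^ (1 - ε) = t * t ^ (-ε) := by rw [sub_eq_add_neg, rpow_add ht0, rpow_one]
  simp only [eqOn_deriv_dampedSquare ε ht, hpow]
  field_simp

lemma eventually_forall_deriv_deriv_dampedSquare_pos :
    ∀ᶠ ε in 𝓝 0, ∀ t ∈ Icc 0 1, 0 < deriv (deriv (dampedSquare ε)) t := by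
  have hlog : Continuous smoothLog := contDiff_smoothLog.continuous
  have hcont : Continuous fun z : ℝ × ℝ ↦ deriv (deriv (dampedSquare z.1)) z.2 := by
    simp only [deriv_deriv_dampedSquare]
    fun_prop
  refine isCompact_Icc.eventually_forall_of_forall_eventually fun t _ ↦
    hcont.continuousAt.eventually_const_lt ?_
  simp [deriv_deriv_dampedSquare]

lemma exists_dampedSquare_parameter {a : ℝ} (ha : a < 1) :
    ∃ ε ∈ Ioo 0 1, a < deriv (dampedSquare ε) 1 ∧
      ∀ t ≥ 0, 0 < deriv (deriv (dampedSquare ε)) t := by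
  have hslope : ∀ᶠ ε in 𝓝 0, a < deriv (dampedSquare ε) 1 := by
    have hcont : Continuous fun ε ↦ deriv (dampedSquare ε) 1 := by
      simp only [deriv_dampedSquare]
      fun_prop
    exact hcont.continuousAt.eventually_const_lt (by simpa [deriv_dampedSquare])
  have hsmall := (hslope.and eventually_forall_deriv_deriv_dampedSquare_pos).filter_mono
    (nhdsWithin_le_nhds (s := Ioi 0))
  obtain ⟨ε, ⟨ha', hpos⟩, hε⟩ := (hsmall.and (Ioo_mem_nhdsGT one_pos)).exists
  refine ⟨ε, hε, ha', fun t ht ↦ ?_⟩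
  rcases le_or_gt t 1 with ht1 | ht1
  · exact hpos t ⟨ht, ht1⟩
  · have h1 : 0 < 1 - ε := sub_pos.2 hε.2
    have h2 : 0 < 2 - ε := by linarith
    have h3 : 0 < powerCoeff ε := (powerCoeff_mem_Ioo hε.1.le).1
    rw [eqOn_deriv_deriv_dampedSquare ε ht1]
    positivity

end DampedSquare

section CutoffFunction

/-- The cut-off function, with the exponent of its power regime equal to `2 - ε`: it is the damped
square up to time `T` and a quadratic polynomial from time `T + 1` on. -/
noncomputable def cutoff (ε T : ℝ) : ℝ → ℝ :=
  quadraticTail (dampedSquare ε) T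

variable {ε T : ℝ}

lemma contDiff_cutoff (ε T : ℝ) : ContDiff ℝ ∞ (cutoff ε T) :=
  contDiff_quadraticTail (contDiff_dampedSquare ε) T

lemma differentiable_deriv_cutoff (ε T : ℝ) : Differentiable ℝ (deriv (cutoff ε T)) :=
  differentiable_deriv_quadraticTail (contDiff_two_dampedSquare ε) T

lemma eqOn_deriv_cutoff (ε T : ℝ) : EqOn (deriv (cutoff ε T)) (deriv (dampedSquare ε)) (Iic T) :=
  eqOn_deriv_quadraticTail (contDiff_two_dampedSquare ε) T

lemma deriv_deriv_cutoff (ε T : ℝ) :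
    deriv (deriv (cutoff ε T)) = flattenAfter (deriv (deriv (dampedSquare ε))) T :=
  deriv_deriv_quadraticTail (contDiff_two_dampedSquare ε) T

lemma cutoff_eq_rpow {t : ℝ} (ht : t ∈ Icc 1 T) :
    cutoff ε T t = powerCoeff ε * t ^ (2 - ε) := by
  rw [cutoff, eqOn_quadraticTail (contDiff_two_dampedSquare ε) T ht.2,
    dampedSquare_of_one_le ε ht.1]

lemma cutoff_zero (hT : 0 ≤ T) : cutoff ε T 0 = 0 := by
  simp [cutoff, eqOn_quadraticTail (contDiff_two_dampedSquare ε) T hT, dampedSquare]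

lemma deriv_cutoff_zero (hT : 0 ≤ T) : deriv (cutoff ε T) 0 = 0 := by
  simp [eqOn_deriv_cutoff ε T hT, deriv_dampedSquare]

lemma deriv_deriv_cutoff_zero (hT : 0 ≤ T) : deriv (deriv (cutoff ε T)) 0 = 1 := by
  simp [deriv_deriv_cutoff, flattenAfter_of_le hT, deriv_deriv_dampedSquare, smoothLog_zero]

lemma exists_pos_forall_le_deriv_deriv_cutoff (hT : 0 ≤ T)
    (hpos : ∀ t ≥ 0, 0 < deriv (deriv (dampedSquare ε)) t) :
    ∃ σ > 0, ∀ t ≥ 0, σ ≤ deriv (deriv (cutoff ε T)) t := by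
  rw [deriv_deriv_cutoff]
  exact exists_pos_forall_le_flattenAfter
    (continuous_deriv_deriv (contDiff_two_dampedSquare ε)) hpos hT

lemma strictAntiOn_deriv_cutoff_div (hε : ε ∈ Ioo 0 1) (hT : 1 < T) :
    StrictAntiOn (fun t ↦ deriv (cutoff ε T) t / t) (Ioi 0) :=
  strictAntiOn_deriv_quadraticTail_div (contDiff_two_dampedSquare ε) (one_pos.trans hT)
    ((antitoneOn_deriv_deriv_dampedSquare hε).mono (Ici_subset_Ioi.2 hT))
    fun _ ↦ mul_deriv_deriv_dampedSquare_lt ⟨hε.1, hε.2.trans one_lt_two⟩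

lemma exists_tendsto_deriv_cutoff_div_atTop (hε : ε ∈ Ioo 0 2) (hT : 0 < T) :
    ∃ L, Tendsto (fun t ↦ deriv (cutoff ε T) t / t) atTop (𝓝 L) ∧
      L < deriv (dampedSquare ε) T / T :=
  have hf := contDiff_two_dampedSquare ε
  ⟨_, tendsto_deriv_quadraticTail_div_atTop hf T,
    deriv_lt_div_of_mul_deriv_lt hf.differentiable_deriv_two
      (fun _ ↦ mul_deriv_deriv_dampedSquare_lt hε) hT (le_add_of_nonneg_right zero_le_one)⟩

lemma exists_cutoff_eq_quadratic (hT : 0 ≤ T)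
    (hpos : ∀ t ≥ 0, 0 < deriv (deriv (dampedSquare ε)) t) :
    ∃ p q r, p ≠ 0 ∧ ∀ t ≥ T + 1, cutoff ε T t = p * t ^ 2 + q * t + r := by
  obtain ⟨q, r, hquad⟩ := exists_quadraticTail_eq_quadratic (contDiff_two_dampedSquare ε) T
  exact ⟨_, q, r, (half_pos (hpos (T + 1) (by positivity))).ne', hquad⟩

lemma cutoff_eq_rpow_of_deriv_div_mem_Icc (hε : ε ∈ Ioo 0 1) (hT : 1 < T) {a b t : ℝ}
    (ha : deriv (dampedSquare ε) T / T < a) (hb : b < deriv (dampedSquare ε) 1) (ht : 0 < t)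
    (hab : deriv (cutoff ε T) t / t ∈ Icc a b) : cutoff ε T t = powerCoeff ε * t ^ (2 - ε) := by
  refine cutoff_eq_rpow (Ioo_subset_Icc_self ?_)
  refine mem_Ioo_of_strictAntiOn (strictAntiOn_deriv_cutoff_div hε hT) (mem_Ioi.2 one_pos)
    (one_pos.trans hT) ht ?_ ?_ hab
  · rwa [eqOn_deriv_cutoff ε T hT.le, div_one]
  · rwa [eqOn_deriv_cutoff ε T self_mem_Iic]

end CutoffFunction

/-- Existence of the cut-off function `φ = φ_ϑ` of Lemma 2.1. -/
theorem exists_cutoff_function :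
    ∃ ϑ₀ : ℝ, ϑ₀ ∈ Set.Ioo (0 : ℝ) 1 ∧
      ∀ ϑ ∈ Set.Ioo (0 : ℝ) ϑ₀,
        ∃ (φ : ℝ → ℝ) (σ α c : ℝ),
          ContDiff ℝ ∞ φ ∧ (∀ t > (0 : ℝ), 0 < φ t) ∧
          0 < σ ∧ α ∈ Set.Ioo (1 : ℝ) 2 ∧ c ∈ Set.Ioo (0 : ℝ) 1 ∧
          -- (i)
          (φ 0 = 0 ∧ deriv φ 0 = 0 ∧ deriv (deriv φ) 0 = 1 ∧
            Filter.Tendsto (fun t => deriv φ t / t) (nhdsWithin 0 (Set.Ioi 0)) (nhds 1)) ∧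
          -- (ii)
          (∃ T > (0 : ℝ), ∃ p q r : ℝ, p ≠ 0 ∧ ∀ t ≥ T, φ t = p * t ^ 2 + q * t + r) ∧
          -- (iii)
          (StrictAntiOn (fun t => deriv φ t / t) (Set.Ioi 0) ∧
            ∃ L, Filter.Tendsto (fun t => deriv φ t / t) Filter.atTop (nhds L) ∧ L < ϑ) ∧
          -- (iv)
          ((∀ t > (0 : ℝ), σ ≤ min (deriv φ t / t) (deriv (deriv φ) t)) ∧
            StrictConvexOn ℝ (Set.Ici 0) φ ∧
            (∀ t ≥ (0 : ℝ), deriv φ t = 0 → t = 0)) ∧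
          -- (v)
          (∀ t > (0 : ℝ), deriv φ t / t ∈ Set.Icc ϑ (1 - ϑ) → φ t = c * t ^ α) := by
  refine ⟨1 / 2, by norm_num, fun ϑ hϑ ↦ ?_⟩
  obtain ⟨ε, hε, hslope_one, hpos⟩ := exists_dampedSquare_parameter (sub_lt_self 1 hϑ.1)
  obtain ⟨T, hslope_T, hT⟩ := (((tendsto_deriv_dampedSquare_div_atTop hε.1).eventually_lt_const
    hϑ.1).and (eventually_gt_atTop 1)).exists
  have hT0 : 0 < T := one_pos.trans hT
  obtain ⟨σ, hσ, hσ_le⟩ := exists_pos_forall_le_deriv_deriv_cutoff hT0.le hpos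
  obtain ⟨L, hL, hL_lt⟩ :=
    exists_tendsto_deriv_cutoff_div_atTop ⟨hε.1, hε.2.trans one_lt_two⟩ hT0
  have hφ := contDiff_cutoff ε T
  have hφ' := differentiable_deriv_cutoff ε T
  have hφ'0 := deriv_cutoff_zero (ε := ε) hT0.le
  have hφ''0 := deriv_deriv_cutoff_zero (ε := ε) hT0.le
  have hφ'_pos := pos_of_deriv_pos hφ'.continuous hφ'0 fun t ht ↦ hσ.trans_le (hσ_le t ht.le)
  exact ⟨cutoff ε T, σ, 2 - ε, powerCoeff ε, hφ,
    pos_of_deriv_pos hφ.continuous (cutoff_zero hT0.le) hφ'_pos, hσ,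
    ⟨by linarith [hε.2], by linarith [hε.1]⟩, powerCoeff_mem_Ioo hε.1.le,
    ⟨cutoff_zero hT0.le, hφ'0, hφ''0, hφ''0 ▸ tendsto_div_nhdsGT_zero (hφ' 0) hφ'0⟩,
    ⟨T + 1, by positivity, exists_cutoff_eq_quadratic hT0.le hpos⟩,
    ⟨strictAntiOn_deriv_cutoff_div hε hT, L, hL, hL_lt.trans hslope_T⟩,
    ⟨le_min_div_deriv hφ' hφ'0 hσ_le,
      strictConvexOn_of_deriv2_pos' (convex_Ici 0) hφ.continuous.continuousOn
        fun t ht ↦ hσ.trans_le (hσ_le t ht),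
      fun t ht hcrit ↦ (not_lt.1 fun h ↦ (hφ'_pos t h).ne' hcrit).antisymm ht⟩,
    fun t ht ↦ cutoff_eq_rpow_of_deriv_div_mem_Icc hε hT hslope_T hslope_one ht⟩
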